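/- arXiv:math/0004153 — 3 statements merged into one kernel-verified Lean document; each statement's English description precedes it below -/
import Mathlib

section
/- Let U ⊆ ℝ² be open and r : U → ℝ³ a C³ immersion with smooth unit normal n (‖n‖ = 1 and ⟨n, ∂_{q^α} r⟩ = 0 for α = 1,2). With second fundamental form coefficients τ_{αβ} = ⟨∂²_{q^β q^α} r, n⟩ and R_{1212} the covariant Riemann–Christoffel curvature component of the induced metric g_{αβ} = ⟨∂_{q^α} r, ∂_{q^β} r⟩, one has R_{1212} = τ_{11} τ_{22} − τ_{12}²; consequently the Gaussian curvature κ = det(τ_{αβ})/det(g_{αβ}) satisfies κ = R_{1212}/det(g_{αβ}). -/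
open scoped RealInnerProductSpace

noncomputable section

/-- Partial derivative of a vector-valued map in the `α`-th coordinate direction. -/
def pdv {M N : ℕ} (f : EuclideanSpace ℝ (Fin M) → EuclideanSpace ℝ (Fin N)) (α : Fin M)
    (x : EuclideanSpace ℝ (Fin M)) : EuclideanSpace ℝ (Fin N) :=
  fderiv ℝ f x (EuclideanSpace.single α 1)

/-- Partial derivative of a scalar-valued map in the `α`-th coordinate direction. -/
def pds {M : ℕ} (f : EuclideanSpace ℝ (Fin M) → ℝ) (α : Fin M)
    (x : EuclideanSpace ℝ (Fin M)) : ℝ :=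
  fderiv ℝ f x (EuclideanSpace.single α 1)

/-- The tangent vectors `g_α = ∂_{q^α} r`. -/
def gvec {M N : ℕ} (r : EuclideanSpace ℝ (Fin M) → EuclideanSpace ℝ (Fin N)) (α : Fin M)
    (x : EuclideanSpace ℝ (Fin M)) : EuclideanSpace ℝ (Fin N) :=
  pdv r α x

/-- The induced metric `g_{αβ} = ⟨g_α, g_β⟩`. -/
def gmat {M N : ℕ} (r : EuclideanSpace ℝ (Fin M) → EuclideanSpace ℝ (Fin N))
    (x : EuclideanSpace ℝ (Fin M)) : Matrix (Fin M) (Fin M) ℝ :=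
  Matrix.of fun α β => ⟪gvec r α x, gvec r β x⟫

/-- The Christoffel symbols of the second kind,
`Γ^γ_{αβ} = Σ_λ g^{γλ} ⟨∂_{q^β} g_α, g_λ⟩`. -/
def Γ2 {M N : ℕ} (r : EuclideanSpace ℝ (Fin M) → EuclideanSpace ℝ (Fin N))
    (γ α β : Fin M) (x : EuclideanSpace ℝ (Fin M)) : ℝ :=
  ∑ lam, (gmat r x)⁻¹ γ lam * ⟪pdv (gvec r α) β x, gvec r lam x⟫

/-- The mixed Riemann–Christoffel curvature
`R^γ_{αδβ} = ∂_{q^δ} Γ^γ_{αβ} - ∂_{q^β} Γ^γ_{αδ} + Σ_λ (Γ^λ_{αβ} Γ^γ_{λδ} - Γ^λ_{αδ} Γ^γ_{λβ})`. -/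
def Rmix {M N : ℕ} (r : EuclideanSpace ℝ (Fin M) → EuclideanSpace ℝ (Fin N))
    (γ α δ β : Fin M) (x : EuclideanSpace ℝ (Fin M)) : ℝ :=
  pds (Γ2 r γ α β) δ x - pds (Γ2 r γ α δ) β x +
    ∑ lam, (Γ2 r lam α β x * Γ2 r γ lam δ x - Γ2 r lam α δ x * Γ2 r γ lam β x)

/-- The covariant curvature `R_{ραδβ} = Σ_γ g_{γρ} R^γ_{αδβ}`. -/
def Rcov {M N : ℕ} (r : EuclideanSpace ℝ (Fin M) → EuclideanSpace ℝ (Fin N))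
    (ρ α δ β : Fin M) (x : EuclideanSpace ℝ (Fin M)) : ℝ :=
  ∑ γ, gmat r x γ ρ * Rmix r γ α δ β x

theorem aux_pdv_contDiffOn {M N : ℕ} {U : Set (EuclideanSpace ℝ (Fin M))} (hU : IsOpen U)
    {f : EuclideanSpace ℝ (Fin M) → EuclideanSpace ℝ (Fin N)} {k m : ℕ∞}
    (hf : ContDiffOn ℝ k f U) (h : m + 1 ≤ k) (α : Fin M) :
    ContDiffOn ℝ m (pdv f α) U := by
  have h1 : ContDiffOn ℝ m (fderiv ℝ f) U :=
    hf.fderiv_of_isOpen hU (by exact_mod_cast h)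
  exact h1.clm_apply contDiffOn_const

theorem aux_pdv_comm {M N : ℕ} {f : EuclideanSpace ℝ (Fin M) → EuclideanSpace ℝ (Fin N)}
    {x : EuclideanSpace ℝ (Fin M)} (hf : ContDiffAt ℝ 2 f x) (α β : Fin M) :
    pdv (pdv f α) β x = pdv (pdv f β) α x := by
  have hs : IsSymmSndFDerivAt ℝ f x := hf.isSymmSndFDerivAt (by simp)
  have hd : DifferentiableAt ℝ (fderiv ℝ f) x :=
    (hf.fderiv_right (m := 1) (by norm_num)).differentiableAt (by norm_num)
  have key : ∀ a b : Fin M, pdv (pdv f a) b x =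
      fderiv ℝ (fderiv ℝ f) x (EuclideanSpace.single b 1) (EuclideanSpace.single a 1) := by
    intro a b
    change fderiv ℝ (fun y => fderiv ℝ f y (EuclideanSpace.single a 1)) x _ = _
    rw [fderiv_clm_apply hd (differentiableAt_const _)]
    simp
  rw [key, key]
  exact hs _ _

theorem aux_pds_inner {M N : ℕ} {f g : EuclideanSpace ℝ (Fin M) → EuclideanSpace ℝ (Fin N)}
    {x : EuclideanSpace ℝ (Fin M)} (hf : DifferentiableAt ℝ f x) (hg : DifferentiableAt ℝ g x)
    (α : Fin M) :
    pds (fun y => ⟪f y, g y⟫) α x = ⟪f x, pdv g α x⟫ + ⟪pdv f α x, g x⟫ := by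
  unfold pds pdv
  rw [fderiv_inner_apply ℝ hf hg]

theorem aux_pds_mul {M : ℕ} {f g : EuclideanSpace ℝ (Fin M) → ℝ}
    {x : EuclideanSpace ℝ (Fin M)} (hf : DifferentiableAt ℝ f x) (hg : DifferentiableAt ℝ g x)
    (α : Fin M) :
    pds (fun y => f y * g y) α x = f x * pds g α x + g x * pds f α x := by
  unfold pds
  rw [fderiv_fun_mul hf hg]
  simp

theorem aux_pds_add {M : ℕ} {f g : EuclideanSpace ℝ (Fin M) → ℝ}
    {x : EuclideanSpace ℝ (Fin M)} (hf : DifferentiableAt ℝ f x) (hg : DifferentiableAt ℝ g x)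
    (α : Fin M) :
    pds (fun y => f y + g y) α x = pds f α x + pds g α x := by
  unfold pds
  rw [fderiv_fun_add hf hg]
  simp

theorem aux_det_ne {N : ℕ} (r : EuclideanSpace ℝ (Fin 2) → EuclideanSpace ℝ (Fin N))
    (x : EuclideanSpace ℝ (Fin 2)) (h : LinearIndependent ℝ fun α => gvec r α x) :
    (gmat r x).det ≠ 0 := by
  have h1 := Matrix.posDef_gram_of_linearIndependent (𝕜 := ℝ) h
  have h2 : gmat r x = Matrix.gram ℝ (fun α => gvec r α x) := rfl
  rw [h2]
  exact h1.det_pos.ne'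

theorem aux_orth_zero (g : Fin 2 → EuclideanSpace ℝ (Fin 3)) (hg : LinearIndependent ℝ g)
    (n v : EuclideanSpace ℝ (Fin 3)) (hn : ‖n‖ = 1) (hp : ∀ α, ⟪n, g α⟫ = 0)
    (hv : ∀ α, ⟪v, g α⟫ = 0) (hvn : ⟪v, n⟫ = 0) : v = 0 := by
  have hli : LinearIndependent ℝ (Fin.cons n g : Fin 3 → EuclideanSpace ℝ (Fin 3)) := by
    rw [linearIndependent_finCons]
    refine ⟨hg, fun hmem => ?_⟩
    have : ∀ w ∈ Submodule.span ℝ (Set.range g), ⟪n, w⟫ = 0 := by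
      intro w hw
      induction hw using Submodule.span_induction with
      | mem w hw => obtain ⟨a, rfl⟩ := hw; exact hp a
      | zero => simp
      | add a b _ _ ha hb => rw [inner_add_right, ha, hb, add_zero]
      | smul c a _ ha => rw [inner_smul_right, ha, mul_zero]
    have h0 := this n hmem
    rw [real_inner_self_eq_norm_sq, hn] at h0
    norm_num at h0
  have htop := hli.span_eq_top_of_card_eq_finrank (by simp)
  have hall : ∀ w ∈ Submodule.span ℝ
      (Set.range (Fin.cons n g : Fin 3 → EuclideanSpace ℝ (Fin 3))), ⟪v, w⟫ = 0 := by
    intro w hw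
    induction hw using Submodule.span_induction with
    | mem w hw =>
      obtain ⟨a, rfl⟩ := hw
      refine Fin.cases ?_ (fun i => ?_) a
      · simpa using hvn
      · simpa using hv i
    | zero => simp
    | add a b _ _ ha hb => rw [inner_add_right, ha, hb, add_zero]
    | smul c a _ ha => rw [inner_smul_right, ha, mul_zero]
  rw [htop] at hall
  exact inner_self_eq_zero.mp (hall v trivial)

theorem aux_lower {N : ℕ} (r : EuclideanSpace ℝ (Fin 2) → EuclideanSpace ℝ (Fin N))
    (x : EuclideanSpace ℝ (Fin 2)) (h : (gmat r x).det ≠ 0) (ρ α β : Fin 2) :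
    ⟪pdv (gvec r α) β x, gvec r ρ x⟫ =
      ⟪gvec r ρ x, gvec r 0 x⟫ * Γ2 r 0 α β x + ⟪gvec r ρ x, gvec r 1 x⟫ * Γ2 r 1 α β x := by
  have h1 : (gmat r x) * (gmat r x)⁻¹ = 1 := Matrix.mul_nonsing_inv _ (isUnit_iff_ne_zero.mpr h)
  have h2 : (gmat r x).mulVec (fun γ => Γ2 r γ α β x) =
      fun lam => ⟪pdv (gvec r α) β x, gvec r lam x⟫ := by
    have : (fun γ => Γ2 r γ α β x) =
      (gmat r x)⁻¹.mulVec (fun lam => ⟪pdv (gvec r α) β x, gvec r lam x⟫) := rfl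
    rw [this, Matrix.mulVec_mulVec, h1, Matrix.one_mulVec]
  have h3 := congrFun h2 ρ
  simp only [Matrix.mulVec, dotProduct, Fin.sum_univ_two] at h3
  exact h3.symm

theorem aux_gamma_diff {N : ℕ} (r : EuclideanSpace ℝ (Fin 2) → EuclideanSpace ℝ (Fin N))
    (x : EuclideanSpace ℝ (Fin 2)) (h : (gmat r x).det ≠ 0)
    (hg : ∀ α, DifferentiableAt ℝ (gvec r α) x)
    (hgg : ∀ α β, DifferentiableAt ℝ (pdv (gvec r α) β) x) (γ α β : Fin 2) :
    DifferentiableAt ℝ (Γ2 r γ α β) x := by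
  have hm : ∀ a b, DifferentiableAt ℝ (fun y => gmat r y a b) x := fun a b =>
    (hg a).inner ℝ (hg b)
  have hdet : DifferentiableAt ℝ (fun y => (gmat r y).det) x := by
    simp only [Matrix.det_fin_two]
    exact ((hm 0 0).mul (hm 1 1)).sub ((hm 0 1).mul (hm 1 0))
  have hadj : ∀ a b, DifferentiableAt ℝ (fun y => (gmat r y).adjugate a b) x := by
    intro a b
    simp only [Matrix.adjugate_fin_two]
    fin_cases a <;> fin_cases b
    · exact hm 1 1
    · exact (hm 0 1).neg
    · exact (hm 1 0).neg
    · exact hm 0 0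
  have hinv : ∀ a b, DifferentiableAt ℝ (fun y => (gmat r y)⁻¹ a b) x := by
    intro a b
    simp only [Matrix.inv_def, Ring.inverse_eq_inv', Matrix.smul_apply, smul_eq_mul]
    exact (hdet.inv h).mul (hadj a b)
  unfold Γ2
  simp only [Fin.sum_univ_two]
  exact ((hinv γ 0).mul ((hgg α β).inner ℝ (hg 0))).add
    ((hinv γ 1).mul ((hgg α β).inner ℝ (hg 1)))


/-- for a `C³` immersion `r : U → ℝ³` on an open `U ⊆ ℝ²` with smooth unit
normal `n`, and second fundamental form `τ_{αβ} = ⟨∂²_{q^β q^α} r, n⟩`, one has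
`R₁₂₁₂ = τ₁₁ τ₂₂ - τ₁₂²` (0-based: `Rcov r 0 1 0 1`), and consequently the Gaussian
curvature `κ = det τ / det g` satisfies `κ = R₁₂₁₂ / det g`. -/
theorem gaussian_curvature_eq_R1212_div_det {U : Set (EuclideanSpace ℝ (Fin 2))}
    (hU : IsOpen U)
    (r : EuclideanSpace ℝ (Fin 2) → EuclideanSpace ℝ (Fin 3))
    (hr : ContDiffOn ℝ 3 r U)
    (himm : ∀ x ∈ U, LinearIndependent ℝ fun α => gvec r α x)
    (n : EuclideanSpace ℝ (Fin 2) → EuclideanSpace ℝ (Fin 3))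
    (hn : ContDiffOn ℝ (⊤ : ℕ∞) n U)
    (hunit : ∀ x ∈ U, ‖n x‖ = 1)
    (hperp : ∀ x ∈ U, ∀ α : Fin 2, ⟪n x, gvec r α x⟫ = 0)
    (τ : Fin 2 → Fin 2 → EuclideanSpace ℝ (Fin 2) → ℝ)
    (hτ : ∀ α β x, τ α β x = ⟪pdv (gvec r α) β x, n x⟫) :
    ∀ x ∈ U,
      Rcov r 0 1 0 1 x = τ 0 0 x * τ 1 1 x - (τ 0 1 x) ^ 2 ∧
      Matrix.det (Matrix.of fun α β : Fin 2 => τ α β x) / Matrix.det (gmat r x) =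
        Rcov r 0 1 0 1 x / Matrix.det (gmat r x) := by
  intro x hx
  have hg2 : ∀ α, ContDiffOn ℝ 2 (gvec r α) U := fun α =>
    aux_pdv_contDiffOn hU (k := 3) (m := 2) hr (by norm_num) α
  have hgg1 : ∀ α β, ContDiffOn ℝ 1 (pdv (gvec r α) β) U := fun α β =>
    aux_pdv_contDiffOn hU (k := 2) (m := 1) (hg2 α) (by norm_num) β
  have hUx := hU.mem_nhds hx
  have hgd : ∀ α, DifferentiableAt ℝ (gvec r α) x := fun α =>
    ((hg2 α).contDiffAt hUx).differentiableAt (by norm_num)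
  have hggd : ∀ α β, DifferentiableAt ℝ (pdv (gvec r α) β) x := fun α β =>
    ((hgg1 α β).contDiffAt hUx).differentiableAt (by norm_num)
  have hdet : ∀ y ∈ U, (gmat r y).det ≠ 0 := fun y hy => aux_det_ne r y (himm y hy)
  have hΓ : ∀ γ α β, DifferentiableAt ℝ (Γ2 r γ α β) x := fun γ α β =>
    aux_gamma_diff r x (hdet x hx) hgd hggd γ α β
  have hlow := aux_lower r x (hdet x hx)
  have hsym1 : pdv (gvec r 0) 1 x = pdv (gvec r 1) 0 x :=
    aux_pdv_comm ((hr.contDiffAt hUx).of_le (by norm_num)) 0 1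
  have hsym2 : pdv (pdv (gvec r 1) 1) 0 x = pdv (pdv (gvec r 1) 0) 1 x :=
    aux_pdv_comm ((hg2 1).contDiffAt hUx) 1 0
  -- Gauss decomposition
  have hgauss : ∀ α β, pdv (gvec r α) β x =
      Γ2 r 0 α β x • gvec r 0 x + Γ2 r 1 α β x • gvec r 1 x + τ α β x • n x := by
    intro α β
    have hnn : ⟪n x, n x⟫ = (1 : ℝ) := by
      rw [real_inner_self_eq_norm_sq, hunit x hx]; norm_num
    have := aux_orth_zero (fun α => gvec r α x) (himm x hx) (n x)
      (pdv (gvec r α) β x -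
        (Γ2 r 0 α β x • gvec r 0 x + Γ2 r 1 α β x • gvec r 1 x + τ α β x • n x))
      (hunit x hx) (hperp x hx) (by
        intro ρ
        simp only [inner_sub_left, inner_add_left, real_inner_smul_left, hperp x hx]
        rw [hlow ρ α β, real_inner_comm (gvec r ρ x) (gvec r 0 x),
          real_inner_comm (gvec r ρ x) (gvec r 1 x)]
        ring) (by
        simp only [inner_sub_left, inner_add_left, real_inner_smul_left, hnn, hτ]
        rw [real_inner_comm (n x) (gvec r 0 x), real_inner_comm (n x) (gvec r 1 x),
          hperp x hx, hperp x hx]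
        ring)
    exact sub_eq_zero.mp this
  have hinner : ∀ α β ρ δ, ⟪pdv (gvec r α) β x, pdv (gvec r ρ) δ x⟫ =
      Γ2 r 0 α β x * ⟪pdv (gvec r ρ) δ x, gvec r 0 x⟫
      + Γ2 r 1 α β x * ⟪pdv (gvec r ρ) δ x, gvec r 1 x⟫ + τ α β x * τ ρ δ x := by
    intro α β ρ δ
    rw [hτ ρ δ]
    conv_lhs => rw [hgauss α β]
    simp only [inner_add_left, real_inner_smul_left]
    rw [real_inner_comm (pdv (gvec r ρ) δ x) (gvec r 0 x),
      real_inner_comm (pdv (gvec r ρ) δ x) (gvec r 1 x),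
      real_inner_comm (pdv (gvec r ρ) δ x) (n x)]
  -- differentiated lowering identity
  have hder : ∀ ρ α β δ,
      ⟪pdv (gvec r α) β x, pdv (gvec r ρ) δ x⟫ + ⟪pdv (pdv (gvec r α) β) δ x, gvec r ρ x⟫ =
      (⟪gvec r ρ x, gvec r 0 x⟫ * pds (Γ2 r 0 α β) δ x
        + Γ2 r 0 α β x * (⟪gvec r ρ x, pdv (gvec r 0) δ x⟫ + ⟪pdv (gvec r ρ) δ x, gvec r 0 x⟫))
      + (⟪gvec r ρ x, gvec r 1 x⟫ * pds (Γ2 r 1 α β) δ x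
        + Γ2 r 1 α β x * (⟪gvec r ρ x, pdv (gvec r 1) δ x⟫ + ⟪pdv (gvec r ρ) δ x, gvec r 1 x⟫)) := by
    intro ρ α β δ
    rw [← aux_pds_inner (hggd α β) (hgd ρ), ← aux_pds_inner (hgd ρ) (hgd 0),
      ← aux_pds_inner (hgd ρ) (hgd 1),
      ← aux_pds_mul ((hgd ρ).inner ℝ (hgd 0)) (hΓ 0 α β),
      ← aux_pds_mul ((hgd ρ).inner ℝ (hgd 1)) (hΓ 1 α β),
      ← aux_pds_add (((hgd ρ).inner ℝ (hgd 0)).fun_mul (hΓ 0 α β))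
        (((hgd ρ).inner ℝ (hgd 1)).fun_mul (hΓ 1 α β))]
    unfold pds
    rw [Filter.EventuallyEq.fderiv_eq]
    filter_upwards [hUx] with y hy
    exact aux_lower r y (hdet y hy) ρ α β
  have hmain : Rcov r 0 1 0 1 x = τ 0 0 x * τ 1 1 x - (τ 0 1 x) ^ 2 := by
    have hτs : τ 1 0 x = τ 0 1 x := by rw [hτ, hτ, hsym1]
    have e1 := hder 0 1 1 0
    have e2 := hder 0 1 0 1
    rw [hinner 1 1 0 0] at e1
    rw [hinner 1 0 0 1, ← hsym2, hτs] at e2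
    have c : ∀ a δ, ⟪gvec r 0 x, pdv (gvec r a) δ x⟫ =
      ⟪gvec r 0 x, gvec r 0 x⟫ * Γ2 r 0 a δ x + ⟪gvec r 0 x, gvec r 1 x⟫ * Γ2 r 1 a δ x := by
      intro a δ
      rw [real_inner_comm]
      exact hlow 0 a δ
    simp only [c] at e1 e2
    have hm0 : gmat r x 0 0 = ⟪gvec r 0 x, gvec r 0 x⟫ := rfl
    have hm1 : gmat r x 1 0 = ⟪gvec r 0 x, gvec r 1 x⟫ :=
      real_inner_comm (gvec r 0 x) (gvec r 1 x)
    simp only [Rcov, Rmix, Fin.sum_univ_two, hm0, hm1]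
    linear_combination e2 - e1
  refine ⟨hmain, ?_⟩
  have hτs : τ 1 0 x = τ 0 1 x := by rw [hτ, hτ, hsym1]
  rw [hmain, Matrix.det_fin_two]
  simp only [Matrix.of_apply, hτs]
  ring

end
end

section
/- (Chiò pivotal condensation, diagonal pivot.) Let R be a commutative ring, n ≥ 2, and A an n×n matrix over R (indices 0,…,n−1). Define the (n−1)×(n−1) condensed matrix B by B_{ij} = A_{00} A_{ij} − A_{i0} A_{0j} for i, j ∈ {1,…,n−1}. Then det B = A_{00}^{n−2} · det A. -/
theorem chio_aux {R : Type*} [CommRing R] {m : ℕ}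
    (A : Matrix (Fin (m + 2)) (Fin (m + 2)) R)
    (B : Matrix (Fin (m + 1)) (Fin (m + 1)) R)
    (hB : ∀ i j : Fin (m + 1),
      B i j = A 0 0 * A i.succ j.succ - A i.succ 0 * A 0 j.succ) :
    A 0 0 * B.det = A 0 0 * (A 0 0 ^ m * A.det) := by
  let v : Fin (m + 2) → R := Fin.cons 1 (fun _ => A 0 0)
  let c : Fin (m + 2) → R := Fin.cons 0 (fun i => - A i.succ 0)
  let N : Matrix (Fin (m + 2)) (Fin (m + 2)) R := Matrix.of fun i j => v i * A i j
  let M : Matrix (Fin (m + 2)) (Fin (m + 2)) R := Matrix.of fun i j => N i j + c i * N 0 j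
  have h1 : M.det = N.det :=
    Matrix.det_eq_of_forall_row_eq_smul_add_const c 0 (by simp [c]) (fun i j => rfl)
  have h2 : N.det = (∏ i, v i) * A.det := Matrix.det_mul_column v A
  have h3 : M.det = A 0 0 * B.det := by
    rw [Matrix.det_succ_column_zero, Fin.sum_univ_succ, Finset.sum_eq_zero, add_zero]
    · have : M.submatrix (Fin.succAbove 0) Fin.succ = B := by
        ext i j
        simp [M, N, v, c, hB]
        ring
      rw [this]
      simp [M, N, v, c]
    · intro i _
      have : M i.succ 0 = 0 := by
        simp [M, N, v, c]
        ring
      rw [this]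
      simp
  rw [← h3, h1, h2]
  simp [v, Fin.prod_univ_succ]
  ring

/-- Chiò pivotal condensation, diagonal pivot: for an `n × n` matrix `A`
over a commutative ring with `n = m + 2 ≥ 2`, the `(n-1) × (n-1)` condensed matrix
`B i j = A 0 0 * A i j - A i 0 * A 0 j` (rows and columns other than the `0`-th)
satisfies `det B = A 0 0 ^ (n - 2) * det A`. -/
theorem chio_condensation_diagonal_pivot {R : Type*} [CommRing R] {m : ℕ}
    (A : Matrix (Fin (m + 2)) (Fin (m + 2)) R)
    (B : Matrix (Fin (m + 1)) (Fin (m + 1)) R)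
    (hB : ∀ i j : Fin (m + 1),
      B i j = A 0 0 * A i.succ j.succ - A i.succ 0 * A 0 j.succ) :
    B.det = A 0 0 ^ m * A.det := by
  classical
  let A' : Matrix (Fin (m + 2)) (Fin (m + 2)) (Polynomial R) := Matrix.of fun i j =>
    if i = 0 ∧ j = 0 then Polynomial.X + Polynomial.C (A 0 0) else Polynomial.C (A i j)
  let B' : Matrix (Fin (m + 1)) (Fin (m + 1)) (Polynomial R) := Matrix.of fun i j =>
    A' 0 0 * A' i.succ j.succ - A' i.succ 0 * A' 0 j.succ
  have h := chio_aux A' B' (fun i j => rfl)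
  have hm : (A' 0 0).Monic := by
    simpa [A'] using Polynomial.monic_X_add_C (A 0 0)
  have h' := hm.isRegular.left h
  let f := Polynomial.evalRingHom (0 : R)
  have hA : f.mapMatrix A' = A := by
    ext i j
    by_cases hij : i = 0 ∧ j = 0
    · obtain ⟨rfl, rfl⟩ := hij
      simp [A', f]
    · simp [A', f, hij]
  have hA0 : ∀ i j, f (A' i j) = A i j := fun i j => congrFun (congrFun hA i) j
  have hB' : f.mapMatrix B' = B := by
    ext i j
    simp only [B', RingHom.mapMatrix_apply, Matrix.map_apply, Matrix.of_apply, map_sub, map_mul,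
      hA0, hB]
  have h2 := congrArg f h'
  simpa only [map_mul, map_pow, RingHom.map_det, hA, hB', hA0] using h2
end

section
/- Let M ≥ 3, let τ be a symmetric real M×M matrix (indices 1,…,M) and g a symmetric invertible real M×M matrix, and suppose τ_{11}τ_{22} ≥ 0 and R₁₂₁₂ := τ_{11}τ_{22} − τ_{12}² ≥ 0. Define κ² = det(τ g⁻¹ τ)/det g, and let Δ_{τ11}, Δ_{τ22}, Δ_{τ12}, Δ_{τ21} be the determinants of the Chiò condensations of τ with respect to the pivot entries τ_{11}, τ_{22}, τ_{12}, τ_{21} respectively. Then κ² (det g)² R₁₂₁₂^{M−2} = [ (Δ_{τ11} Δ_{τ22})^{1/(M−2)} − (Δ_{τ12} Δ_{τ21})^{1/(M−2)} ]^{M−2}, where x^{1/(M−2)} denotes the real (M−2)-th root of the nonnegative real x. -/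
theorem chio_zero_aux {n : ℕ} (A : Matrix (Fin (n + 3)) (Fin (n + 3)) ℝ) :
    Matrix.det (Matrix.of fun i j : Fin (n + 2) =>
      A 0 0 * A i.succ j.succ - A i.succ 0 * A 0 j.succ) = A 0 0 ^ (n + 1) * A.det := by
  by_cases ha : A 0 0 = 0
  · have : (Matrix.of fun i j : Fin (n + 2) =>
      A 0 0 * A i.succ j.succ - A i.succ 0 * A 0 j.succ)
      = Matrix.vecMulVec (fun i => - A i.succ 0) (fun j => A 0 j.succ) := by
      ext i j
      simp [Matrix.vecMulVec_apply, ha]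
    rw [this, Matrix.det_vecMulVec, ha]
    simp
  · let B : Matrix (Fin (n + 3)) (Fin (n + 3)) ℝ :=
      Matrix.of (Fin.cons (A 0) fun i j => A i.succ j - A i.succ 0 / A 0 0 * A 0 j)
    have h1 : A.det = B.det := by
      refine Matrix.det_eq_of_forall_row_eq_smul_add_const
        (Fin.cons 0 fun i => A i.succ 0 / A 0 0) 0 (by simp) ?_
      intro i j
      refine Fin.cases ?_ (fun i => ?_) i <;> simp [B]
    have h2 : B.det = A 0 0 * Matrix.det (Matrix.of fun i j : Fin (n + 2) =>
        A i.succ j.succ - A i.succ 0 / A 0 0 * A 0 j.succ) := by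
      rw [Matrix.det_succ_column_zero, Fin.sum_univ_succ]
      have : ∀ i : Fin (n + 2), B i.succ 0 = 0 := by
        intro i
        simp [B, ha]
      simp only [this]
      simp [B]
      left
      congr 1
    have h3 : (Matrix.of fun i j : Fin (n + 2) =>
      A 0 0 * A i.succ j.succ - A i.succ 0 * A 0 j.succ) = A 0 0 • (Matrix.of fun i j : Fin (n + 2) =>
        A i.succ j.succ - A i.succ 0 / A 0 0 * A 0 j.succ) := by
      ext i j
      simp
      field_simp
    rw [h3, Matrix.det_smul, h1, h2, Fintype.card_fin]
    ring

theorem swap_succ_aux {n : ℕ} (i : Fin (n + 2)) :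
    Equiv.swap (0 : Fin (n + 3)) 1 i.succ = (1 : Fin (n + 3)).succAbove i := by
  refine Fin.cases ?_ (fun i => ?_) i
  · simp
  · rw [Equiv.swap_apply_of_ne_of_ne (Fin.succ_ne_zero _)]
    · rw [← Fin.succ_zero_eq_one, Fin.succ_succAbove_succ]
      simp
    · intro h
      have := congrArg Fin.val h
      simp at this


/-- for `M = m + 3 ≥ 3`, a symmetric real `M × M` matrix `τ` and a symmetric
invertible real `M × M` matrix `g` with `τ₁₁ τ₂₂ ≥ 0` and `R₁₂₁₂ = τ₁₁ τ₂₂ - τ₁₂² ≥ 0`,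
the curvature `κ² = det (τ g⁻¹ τ) / det g` and the determinants `Δ_{τpq}` of the Chiò
condensations of `τ` with respect to the pivots `τ₁₁, τ₂₂, τ₁₂, τ₂₁` satisfy
`κ² (det g)² R₁₂₁₂^(M-2) = ((Δ_{τ11} Δ_{τ22})^(1/(M-2)) - (Δ_{τ12} Δ_{τ21})^(1/(M-2)))^(M-2)`,
the `(M-2)`-th roots being real powers (`Real.rpow`). -/
theorem curvature_functional_expression {m : ℕ}
    (τ g : Matrix (Fin (m + 3)) (Fin (m + 3)) ℝ)
    (hτ : τ.IsSymm) (hg : g.IsSymm) (hginv : IsUnit g.det)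
    (h11 : 0 ≤ τ 0 0 * τ 1 1)
    (hR1212 : 0 ≤ τ 0 0 * τ 1 1 - τ 0 1 ^ 2)
    (κ2 : ℝ) (hκ2 : κ2 = (τ * g⁻¹ * τ).det / g.det)
    (Δ11 Δ22 Δ12 Δ21 : ℝ)
    (hΔ11 : Δ11 = Matrix.det (Matrix.of fun i j : Fin (m + 2) =>
      τ 0 0 * τ i.succ j.succ - τ i.succ 0 * τ 0 j.succ))
    (hΔ22 : Δ22 = Matrix.det (Matrix.of fun i j : Fin (m + 2) =>
      τ 1 1 * τ ((1 : Fin (m + 3)).succAbove i) ((1 : Fin (m + 3)).succAbove j)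
        - τ ((1 : Fin (m + 3)).succAbove i) 1 * τ 1 ((1 : Fin (m + 3)).succAbove j)))
    (hΔ12 : Δ12 = Matrix.det (Matrix.of fun i j : Fin (m + 2) =>
      τ 0 1 * τ i.succ ((1 : Fin (m + 3)).succAbove j)
        - τ i.succ 1 * τ 0 ((1 : Fin (m + 3)).succAbove j)))
    (hΔ21 : Δ21 = Matrix.det (Matrix.of fun i j : Fin (m + 2) =>
      τ 1 0 * τ ((1 : Fin (m + 3)).succAbove i) j.succ
        - τ ((1 : Fin (m + 3)).succAbove i) 0 * τ 1 j.succ)) :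
    κ2 * g.det ^ 2 * (τ 0 0 * τ 1 1 - τ 0 1 ^ 2) ^ (m + 1) =
      ((Δ11 * Δ22) ^ (((m : ℝ) + 1))⁻¹ - (Δ12 * Δ21) ^ (((m : ℝ) + 1))⁻¹) ^ (m + 1) := by
  have e11 : Δ11 = τ 0 0 ^ (m + 1) * τ.det := by rw [hΔ11, chio_zero_aux]
  have e22 : Δ22 = τ 1 1 ^ (m + 1) * τ.det := by
    have := chio_zero_aux (τ.submatrix (Equiv.swap (0 : Fin (m + 3)) 1) (Equiv.swap 0 1))
    simp only [Matrix.submatrix_apply, swap_succ_aux, Equiv.swap_apply_left,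
      Matrix.det_submatrix_equiv_self] at this
    rw [hΔ22, this]
  have e12 : Δ12 = τ 0 1 ^ (m + 1) * (- τ.det) := by
    have := chio_zero_aux (τ.submatrix id (Equiv.swap (0 : Fin (m + 3)) 1))
    simp only [Matrix.submatrix_apply, swap_succ_aux, Equiv.swap_apply_left,
      Matrix.det_permute', id] at this
    rw [hΔ12, this, Equiv.Perm.sign_swap (by simp)]
    simp
  have e21 : Δ21 = Δ12 := by
    rw [hΔ21, hΔ12, ← Matrix.det_transpose]
    congr 1
    ext i j
    simp only [Matrix.transpose_apply, Matrix.of_apply]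
    rw [hτ.apply 0 1, hτ.apply i.succ, hτ.apply 0, hτ.apply i.succ 1]
    ring
  have hg0 : g.det ≠ 0 := hginv.ne_zero
  have hk : κ2 * g.det ^ 2 = τ.det ^ 2 := by
    rw [hκ2, Matrix.det_mul, Matrix.det_mul, Matrix.det_nonsing_inv, Ring.inverse_eq_inv']
    field_simp
  have key : ∀ x : ℝ, 0 ≤ x → (x ^ (m + 1) * τ.det ^ 2) ^ (((m : ℝ) + 1))⁻¹
      = x * (τ.det ^ 2) ^ (((m : ℝ) + 1))⁻¹ := by
    intro x hx
    rw [Real.mul_rpow (by positivity) (by positivity)]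
    congr 1
    have := Real.pow_rpow_inv_natCast hx (Nat.succ_ne_zero m)
    push_cast at this
    exact this
  have hd : ((τ.det ^ 2) ^ (((m : ℝ) + 1))⁻¹) ^ (m + 1) = τ.det ^ 2 := by
    have := Real.rpow_inv_natCast_pow (sq_nonneg τ.det) (Nat.succ_ne_zero m)
    push_cast at this
    exact this
  have p1 : Δ11 * Δ22 = (τ 0 0 * τ 1 1) ^ (m + 1) * τ.det ^ 2 := by
    rw [e11, e22, mul_pow]; ring
  have p2 : Δ12 * Δ21 = (τ 0 1 ^ 2) ^ (m + 1) * τ.det ^ 2 := by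
    rw [e21, e12]; ring
  rw [hk, p1, p2, key _ h11, key _ (sq_nonneg _), ← sub_mul, mul_pow, hd]
  ring
end
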